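/- For every integer n ≥ 9, ρ(L_{n,2}) > ρ(Γ_{n,3}), where ρ denotes the spectral radius. -/

import Mathlib

open SimpleGraph

/-- `G` contains a cycle of length `l`. -/
def HasCycleLen {V : Type} (G : SimpleGraph V) (l : ℕ) : Prop :=
  ∃ (v : V) (c : G.Walk v v), c.IsCycle ∧ c.length = l

/-- The circumference of `G`: the length of a longest cycle. -/
noncomputable def circumference {V : Type} (G : SimpleGraph V) : ℕ :=
  sSup {l | HasCycleLen G l}

/-- `G` is weakly pancyclic with girth 3: it contains a cycle of every length `l`
with `3 ≤ l ≤ c(G)`. -/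
def WeaklyPancyclic3 {V : Type} (G : SimpleGraph V) : Prop :=
  HasCycleLen G 3 ∧ ∀ l : ℕ, 3 ≤ l → l ≤ circumference G → HasCycleLen G l

/-- The number of edges of `G`. -/
noncomputable def edgeCount {V : Type} (G : SimpleGraph V) : ℕ :=
  Nat.card G.edgeSet

/-- The degree of `v` in `G`. -/
noncomputable def degCount {V : Type} (G : SimpleGraph V) (v : V) : ℕ :=
  Nat.card (G.neighborSet v)

/-- The spectral radius of `G`: the largest eigenvalue of the adjacency matrix. -/
noncomputable def specRad {V : Type} [Finite V] (G : SimpleGraph V) : ℝ :=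
  letI := Fintype.ofFinite V
  letI := Classical.decEq V
  letI := Classical.decRel G.Adj
  sSup (spectrum ℝ (G.adjMatrix ℝ))

/-- The signless Laplacian spectral radius of `G`: the largest eigenvalue of `D(G) + A(G)`. -/
noncomputable def qSpecRad {V : Type} [Finite V] (G : SimpleGraph V) : ℝ :=
  letI := Fintype.ofFinite V
  letI := Classical.decEq V
  letI := Classical.decRel G.Adj
  sSup (spectrum ℝ (Matrix.diagonal (fun v => (degCount G v : ℝ)) + G.adjMatrix ℝ))

/-- `L_{n,k} = K_1 ∨ (K_{n-k-1} + K_k)`: vertex `0` is the common vertex of a clique on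
the `n - k` vertices `{0, …, n-k-1}` and a clique on the `k+1` vertices `{0} ∪ {n-k, …, n-1}`. -/
def Lgraph (n k : ℕ) : SimpleGraph (Fin n) :=
  SimpleGraph.fromRel (fun u v =>
    u.val = 0 ∨ v.val = 0 ∨ (u.val < n - k ∧ v.val < n - k) ∨
      (n - k ≤ u.val ∧ n - k ≤ v.val))

/-- `Γ_{n,t} = K_2 ∨ (K_{n-2-t} + t·K_1)`: vertices `0,1` are joined to everything,
vertices `2, …, n-t-1` form a clique, and vertices `n-t, …, n-1` are independent. -/
def GammaGraph (n t : ℕ) : SimpleGraph (Fin n) :=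
  SimpleGraph.fromRel (fun u v =>
    u.val < 2 ∨ v.val < 2 ∨ (u.val < n - t ∧ v.val < n - t))

/-- `F` is a member of the family `F_{n,k}`: there is a clique `K` on `n - k` vertices
such that each connected component of `F - K` is a clique all of whose vertices are
adjacent to one single common vertex of `K` and to no other vertex of `K`. -/
def MemF (n k : ℕ) (F : SimpleGraph (Fin n)) : Prop :=
  ∃ K : Finset (Fin n), K.card = n - k ∧ F.IsClique (↑K : Set (Fin n)) ∧
    (∀ u v : ({x : Fin n | x ∉ K} : Set (Fin n)),
      (F.induce {x : Fin n | x ∉ K}).Reachable u v → (u = v ∨ F.Adj u.1 v.1)) ∧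
    (∀ u : ({x : Fin n | x ∉ K} : Set (Fin n)), ∃! w : Fin n, w ∈ K ∧ F.Adj u.1 w) ∧
    (∀ u v : ({x : Fin n | x ∉ K} : Set (Fin n)),
      (F.induce {x : Fin n | x ∉ K}).Reachable u v →
        ∀ w ∈ K, F.Adj u.1 w → F.Adj v.1 w)

/-- `G` is a subgraph of `H` (up to relabelling): there is an injective graph
homomorphism from `G` to `H`. -/
def IsSubgraphOf {n : ℕ} (G H : SimpleGraph (Fin n)) : Prop :=
  ∃ f : G →g H, Function.Injective f

/-!
With `x = n - k - 1`, the two spectral radii are separated by the number `x`. On the side of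
`Γ_{n,k+1}`, a positive vector `w` with `A w ≤ x w` bounds every eigenvalue by `x`. On the side of
`L_{n,k}`, the clique on `x + 1` vertices already gives `ρ ≥ x`, and an edge leaving the clique
makes the inequality strict.
-/

section RealMatrix

open Matrix

variable {ι : Type*} [Fintype ι] [DecidableEq ι] {A : Matrix ι ι ℝ}

theorem le_of_mem_spectrum_of_mulVec_le {w : ι → ℝ} {r x : ℝ} (hA : ∀ i j, 0 ≤ A i j)
    (hw : ∀ i, 0 < w i) (hle : ∀ i, (A *ᵥ w) i ≤ r * w i) (hx : x ∈ spectrum ℝ A) : x ≤ r := by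
  -- Gershgorin's theorem for the conjugate of `A` by the diagonal matrix of `w`.
  let d : (Matrix ι ι ℝ)ˣ :=
    ⟨diagonal w⁻¹, diagonal w, by simp [fun i ↦ inv_mul_cancel₀ (hw i).ne'],
      by simp [fun i ↦ mul_inv_cancel₀ (hw i).ne']⟩
  let B : Matrix ι ι ℝ := diagonal w⁻¹ * A * diagonal w
  have hB (i j : ι) : B i j = (w i)⁻¹ * A i j * w j := by
    simp [B]
  have hB_nonneg (i j : ι) : 0 ≤ B i j := by
    rw [hB]
    exact mul_nonneg (mul_nonneg (inv_nonneg.2 (hw i).le) (hA i j)) (hw j).le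
  have hspec : spectrum ℝ B = spectrum ℝ A := spectrum.units_conjugate (u := d)
  have hxB : Module.End.HasEigenvalue (toLin' B) x := by
    rwa [Module.End.hasEigenvalue_iff_mem_spectrum, spectrum_toLin', hspec]
  obtain ⟨i, hi⟩ := eigenvalue_mem_ball hxB
  calc
    x ≤ B i i + ∑ j ∈ Finset.univ.erase i, ‖B i j‖ := by
      linarith [(le_abs_self _).trans (mem_closedBall_iff_norm.1 hi)]
    _ = ∑ j, B i j := by
      simp only [Real.norm_of_nonneg (hB_nonneg _ _)]
      exact Finset.add_sum_erase _ _ (Finset.mem_univ i)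
    _ = (w i)⁻¹ * (A *ᵥ w) i := by
      simp only [hB, mulVec, dotProduct, Finset.mul_sum, mul_assoc]
    _ ≤ r := (inv_mul_le_iff₀ (hw i)).2 ((hle i).trans_eq (mul_comm _ _))

theorem dotProduct_mulVec_le_sSup_spectrum_mul (hA : A.IsHermitian) (x : ι → ℝ) :
    x ⬝ᵥ A *ᵥ x ≤ sSup (spectrum ℝ A) * (x ⬝ᵥ x) := by
  set r := sSup (spectrum ℝ A)
  have hpos : (algebraMap ℝ (Matrix ι ι ℝ) r - A).PosSemidef := by
    refine posSemidef_iff_isHermitian_and_spectrum_nonneg.2 ⟨?_, ?_⟩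
    · exact (IsSelfAdjoint.algebraMap _ (.all r)).isHermitian.sub hA
    · rw [← spectrum.singleton_sub_eq]
      rintro _ ⟨_, rfl, y, hy, rfl⟩
      exact sub_nonneg.2 (le_csSup A.finite_spectrum.bddAbove hy)
  have h := hpos.dotProduct_mulVec_nonneg x
  simpa [Algebra.algebraMap_eq_smul_one, sub_mulVec, smul_mulVec, dotProduct_sub] using h

theorem lt_sSup_spectrum_of_lt_mulVec (hA : A.IsHermitian) {w : ι → ℝ} {r : ℝ}
    (hw : ∀ i, 0 ≤ w i) (hle : ∀ i, w i ≠ 0 → r * w i ≤ (A *ᵥ w) i)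
    {i : ι} (hi : w i ≠ 0) (hlt : r * w i < (A *ᵥ w) i) : r < sSup (spectrum ℝ A) := by
  have hw_pos : 0 < w i := (hw i).lt_of_ne' hi
  have hquad : r * (w ⬝ᵥ w) < w ⬝ᵥ A *ᵥ w := by
    rw [dotProduct, dotProduct, Finset.mul_sum]
    refine Finset.sum_lt_sum (fun j _ ↦ ?_) ⟨i, Finset.mem_univ i, ?_⟩
    · by_cases hj : w j = 0
      · simp [hj]
      · linarith [mul_le_mul_of_nonneg_left (hle j hj) (hw j)]
    · linarith [mul_lt_mul_of_pos_left hlt hw_pos]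
  have hnorm : 0 < w ⬝ᵥ w :=
    Finset.sum_pos' (fun j _ ↦ mul_self_nonneg (w j)) ⟨i, Finset.mem_univ i, mul_pos hw_pos hw_pos⟩
  have hrayleigh := dotProduct_mulVec_le_sSup_spectrum_mul hA w
  exact lt_of_mul_lt_mul_right (hquad.trans_le hrayleigh) hnorm.le

end RealMatrix

section SpectralRadius

variable {V : Type} [Fintype V] {G : SimpleGraph V} [DecidableRel G.Adj]

theorem specRad_eq_sSup_spectrum [DecidableEq V] :
    specRad G = sSup (spectrum ℝ (G.adjMatrix ℝ)) := by
  unfold specRad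
  congr!

theorem specRad_le_of_sum_neighborFinset_le [Nonempty V] {w : V → ℝ} {r : ℝ} (hw : ∀ v, 0 < w v)
    (hle : ∀ v, ∑ u ∈ G.neighborFinset v, w u ≤ r * w v) : specRad G ≤ r := by
  classical
  have hr : 0 ≤ r := by
    obtain ⟨v⟩ := ‹Nonempty V›
    exact nonneg_of_mul_nonneg_left
      ((Finset.sum_nonneg fun u _ ↦ (hw u).le).trans (hle v)) (hw v)
  have hA (u v : V) : 0 ≤ G.adjMatrix ℝ u v := by
    rw [adjMatrix_apply]
    positivity
  rw [specRad_eq_sSup_spectrum]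
  refine Real.sSup_le (fun x hx ↦ le_of_mem_spectrum_of_mulVec_le hA hw (fun v ↦ ?_) hx) hr
  rw [adjMatrix_mulVec_apply]
  exact hle v

end SpectralRadius

theorem card_sub_one_lt_specRad_of_isClique {V : Type} [Finite V] {G : SimpleGraph V}
    {s : Finset V} (hs : G.IsClique s) {u v : V} (hu : u ∈ s) (hv : v ∉ s) (huv : G.Adj u v) :
    (s.card : ℝ) - 1 < specRad G := by
  classical
  have := Fintype.ofFinite V
  -- The single edge `uv` contributes `#s` to `(A w) v`, which beats `(#s - 1) * w v`.
  let w : V → ℝ := fun z ↦ if z ∈ s then s.card else if z = v then 1 else 0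
  have hw (z : V) : 0 ≤ w z := by positivity
  have hws {z : V} (hz : z ∈ s) : w z = s.card := if_pos hz
  have hwv : w v = 1 := by simp [w, hv]
  have hlt_v : (s.card - 1) * w v < ∑ z ∈ G.neighborFinset v, w z := by
    have : w u ≤ ∑ z ∈ G.neighborFinset v, w z :=
      Finset.single_le_sum (fun z _ ↦ hw z) (by simpa using huv.symm)
    rw [hws hu] at this
    rw [hwv]
    linarith
  have hle_s {y : V} (hy : y ∈ s) : (s.card - 1) * w y ≤ ∑ z ∈ G.neighborFinset y, w z := by
    have hsub : s.erase y ⊆ G.neighborFinset y := fun z hz ↦ by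
      rw [Finset.mem_erase] at hz
      simpa using hs hy hz.2 hz.1.symm
    calc
      (s.card - 1) * w y = ∑ z ∈ s.erase y, w z := by
        rw [Finset.sum_congr rfl fun z hz ↦ hws (Finset.mem_of_mem_erase hz), hws hy,
          Finset.sum_const, nsmul_eq_mul, Finset.cast_card_erase_of_mem hy]
      _ ≤ ∑ z ∈ G.neighborFinset y, w z :=
        Finset.sum_le_sum_of_subset_of_nonneg hsub fun z _ _ ↦ hw z
  rw [specRad_eq_sSup_spectrum]
  refine lt_sSup_spectrum_of_lt_mulVec (i := v) (G.isHermitian_adjMatrix ℝ) hw (fun y hy ↦ ?_)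
    (by simp [hwv]) (by rwa [adjMatrix_mulVec_apply])
  rw [adjMatrix_mulVec_apply]
  by_cases hys : y ∈ s
  · exact hle_s hys
  · obtain rfl : y = v := by simpa [w, hys] using hy
    exact hlt_v.le

theorem lgraph_adj {n k : ℕ} {u v : Fin n} :
    (Lgraph n k).Adj u v ↔ u ≠ v ∧ (u.val = 0 ∨ v.val = 0 ∨ (u.val < n - k ∧ v.val < n - k) ∨
      (n - k ≤ u.val ∧ n - k ≤ v.val)) := by
  rw [Lgraph, fromRel_adj]
  omega

theorem sub_lt_specRad_lgraph {n k : ℕ} (hk : 1 ≤ k) (hkn : k < n) :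
    (n : ℝ) - k - 1 < specRad (Lgraph n k) := by
  let s : Finset (Fin n) := {v | v.val < n - k}
  have hs : (Lgraph n k).IsClique s := fun u hu v hv huv ↦ by
    simp only [s, Finset.coe_filter_univ, Set.mem_ofPred_eq] at hu hv
    exact lgraph_adj.2 ⟨huv, .inr (.inr (.inl ⟨hu, hv⟩))⟩
  have hcard : (s.card : ℝ) = n - k := by
    rw [Fin.card_filter_val_lt, min_eq_right (n.sub_le k), Nat.cast_sub hkn.le]
  have hlt := card_sub_one_lt_specRad_of_isClique hs (u := ⟨0, by omega⟩) (v := ⟨n - 1, by omega⟩)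
    (by simp [s, hkn]) (by simp [s]; omega)
    (lgraph_adj.2 ⟨by simp [Fin.ext_iff]; omega, .inl rfl⟩)
  rwa [hcard] at hlt

theorem gammaGraph_adj {n t : ℕ} {u v : Fin n} :
    (GammaGraph n t).Adj u v ↔
      u ≠ v ∧ (u.val < 2 ∨ v.val < 2 ∨ (u.val < n - t ∧ v.val < n - t)) := by
  rw [GammaGraph, fromRel_adj]
  omega

theorem sum_fin_filter_val_lt {M : Type*} [AddCommMonoid M] (f : ℕ → M) {n p : ℕ} (hp : p ≤ n) :
    ∑ i : Fin n with i.val < p, f i = ∑ j ∈ Finset.range p, f j := by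
  rw [Finset.sum_filter, Fin.sum_univ_eq_sum_range (fun j ↦ if j < p then f j else 0) n,
    ← Finset.sum_filter]
  congr 1
  grind

/-- A positive vector `w` on the vertices of `Γ_{n,t}`, where `m = n - t`. It is chosen to satisfy
`A w = m w` outside the two dominating vertices. -/
def gammaWeight (m j : ℕ) : ℝ := if j < 2 then 3 * m else if j < m then 2 * m else 6

namespace gammaWeight

variable {m : ℕ}

theorem pos (hm : 0 < m) (j : ℕ) : 0 < gammaWeight m j := by
  unfold gammaWeight
  positivity

theorem sum_range_two : ∑ j ∈ Finset.range 2, gammaWeight m j = 6 * m := by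
  simp only [gammaWeight, Finset.sum_range_succ, Finset.sum_range_zero]
  norm_num
  ring

theorem sum_range_self (hm : 2 ≤ m) :
    ∑ j ∈ Finset.range m, gammaWeight m j = 2 * m ^ 2 + 2 * m := by
  have hclique : ∑ j ∈ Finset.Ico 2 m, gammaWeight m j = (m - 2) * (2 * m) := by
    rw [Finset.sum_congr rfl (g := fun _ ↦ (2 * m : ℝ)) fun j hj ↦ ?_]
    · simp [Nat.cast_sub hm]
    · have := Finset.mem_Ico.1 hj
      simp [gammaWeight, this.1.not_gt, this.2]
  rw [← Finset.sum_range_add_sum_Ico _ hm, sum_range_two, hclique]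
  ring

theorem sum_range (hm : 2 ≤ m) {n : ℕ} (hmn : m ≤ n) :
    ∑ j ∈ Finset.range n, gammaWeight m j = 2 * m ^ 2 + 2 * m + 6 * (n - m) := by
  have hindep : ∑ j ∈ Finset.Ico m n, gammaWeight m j = (n - m) * 6 := by
    rw [Finset.sum_congr rfl (g := fun _ ↦ (6 : ℝ)) fun j hj ↦ ?_]
    · simp [Nat.cast_sub hmn]
    · have := (Finset.mem_Ico.1 hj).1
      simp [gammaWeight, this.not_gt, (hm.trans this).not_gt]
  rw [← Finset.sum_range_add_sum_Ico _ hmn, sum_range_self hm, hindep]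
  ring

end gammaWeight

section GammaGraph

variable {n t : ℕ} [DecidableRel (GammaGraph n t).Adj] {v : Fin n}

theorem neighborFinset_gammaGraph_of_lt_two (hv : v.val < 2) :
    (GammaGraph n t).neighborFinset v = Finset.univ.erase v := by
  ext u
  simp [gammaGraph_adj, hv, eq_comm]

theorem neighborFinset_gammaGraph_of_lt_sub (hv₂ : 2 ≤ v.val) (hv : v.val < n - t) :
    (GammaGraph n t).neighborFinset v = Finset.erase {u : Fin n | u.val < n - t} v := by
  ext u
  simp only [mem_neighborFinset, gammaGraph_adj, Finset.mem_erase, Finset.mem_filter_univ]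
  omega

theorem neighborFinset_gammaGraph_of_sub_le (hv₂ : 2 ≤ v.val) (hv : n - t ≤ v.val) :
    (GammaGraph n t).neighborFinset v = ({u | u.val < 2} : Finset (Fin n)) := by
  ext u
  simp only [mem_neighborFinset, gammaGraph_adj, Finset.mem_filter_univ]
  omega

theorem sum_neighborFinset_gammaWeight_le (htn : t + 2 ≤ n) (h : 6 * t ≤ (n - t) * (n - t + 1))
    (v : Fin n) :
    ∑ u ∈ (GammaGraph n t).neighborFinset v, gammaWeight (n - t) u ≤
      (n - t : ℕ) * gammaWeight (n - t) v := by
  have hm : 2 ≤ n - t := by omega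
  rcases lt_or_ge v.val 2 with hv_core | hv_not_core
  · have hR : 6 * (t : ℝ) ≤ (n - t : ℕ) * ((n - t : ℕ) + 1) := mod_cast h
    have hcard : (n : ℝ) - (n - t : ℕ) = t := by
      rw [Nat.cast_sub (by omega), sub_sub_cancel]
    rw [neighborFinset_gammaGraph_of_lt_two hv_core, Finset.sum_erase_eq_sub (Finset.mem_univ v),
      Fin.sum_univ_eq_sum_range (gammaWeight (n - t)), gammaWeight.sum_range hm (n.sub_le t),
      hcard, gammaWeight, if_pos hv_core]
    linarith
  rcases lt_or_ge v.val (n - t) with hv_clique | hv_indep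
  · rw [neighborFinset_gammaGraph_of_lt_sub hv_not_core hv_clique,
      Finset.sum_erase_eq_sub (by simpa using hv_clique), sum_fin_filter_val_lt _ (n.sub_le t),
      gammaWeight.sum_range_self hm, gammaWeight, if_neg hv_not_core.not_gt, if_pos hv_clique]
    linarith
  · rw [neighborFinset_gammaGraph_of_sub_le hv_not_core hv_indep,
      sum_fin_filter_val_lt _ (by omega), gammaWeight.sum_range_two, gammaWeight,
      if_neg hv_not_core.not_gt, if_neg hv_indep.not_gt]
    linarith

end GammaGraph

theorem specRad_gammaGraph_le {n t : ℕ} (htn : t + 2 ≤ n) (h : 6 * t ≤ (n - t) * (n - t + 1)) :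
    specRad (GammaGraph n t) ≤ (n - t : ℕ) := by
  classical
  have : Nonempty (Fin n) := ⟨0, by omega⟩
  exact specRad_le_of_sum_neighborFinset_le (fun v ↦ gammaWeight.pos (by omega) v)
    (sum_neighborFinset_gammaWeight_le htn h)

theorem specRad_Gamma3_lt_general {n k : ℕ} (hk : 1 ≤ k)
    (h : 6 * (k + 1) ≤ (n - (k + 1)) * (n - (k + 1) + 1)) :
    specRad (GammaGraph n (k + 1)) < specRad (Lgraph n k) := by
  have hkn : k + 1 + 2 ≤ n := by
    by_contra! hlt
    have : n - (k + 1) ≤ 1 := by omega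
    nlinarith
  calc
    specRad (GammaGraph n (k + 1)) ≤ (n - (k + 1) : ℕ) := specRad_gammaGraph_le hkn h
    _ = (n : ℝ) - k - 1 := by
      rw [Nat.cast_sub (by omega)]
      push_cast
      ring
    _ < specRad (Lgraph n k) := sub_lt_specRad_lgraph hk (by omega)

/-- Lemma 3.6: `ρ(L_{n,2}) > ρ(Γ_{n,3})` for `n ≥ 9`. -/
theorem specRad_Gamma3_lt (n : ℕ) (hn : 9 ≤ n) :
    specRad (GammaGraph n 3) < specRad (Lgraph n 2) := by
  refine specRad_Gamma3_lt_general (k := 2) one_le_two ?_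
  have hx : 6 ≤ n - 3 := by omega
  nlinarith
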